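/- (Lemma 8.) Let Π be a real symmetric N×N doubly stochastic matrix with I ⪰ Π ≻ 0 and second largest eigenvalue λ₂(Π) < 1. Let (Ω, ℱ, P) be a probability space, let (α_k)_{k≥1} be a positive nonincreasing sequence with Σ_{k=1}^{∞} α_k² < ∞, let L > 0, and let (X_k), (G_k) be random vectors in ℝ^N with X₁ = 0 almost surely, E[‖G_k‖] ≤ L for all k, and X_{k+1} = Π·X_k − α_k·G_k. Then Σ_{k=2}^{∞} α_k·E[‖(I − Π)·X_k‖] < ∞. -/

import Mathlib

open MeasureTheory Filter
open scoped RealInnerProductSpace BigOperators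

/-- The eigenvalues of a hermitian (real symmetric) matrix, sorted in increasing order;
`eigAsc A hA ⟨N-2,_⟩` is the second largest eigenvalue `λ₂`. -/
noncomputable def eigAsc {N : ℕ} (A : Matrix (Fin N) (Fin N) ℝ) (hA : A.IsHermitian) :
    Fin N → ℝ :=
  hA.eigenvalues ∘ Tuple.sort hA.eigenvalues

/-!
The eigenvalues of the symmetric mixing operator `T` lie in `(-1, 1]`, and `1 - T` annihilates the
eigenspace of `1`; so if `ρ < 1` bounds `|μ|` for the finitely many eigenvalues `μ ≠ 1`, then `T`
contracts the seminorm `‖(1 - T) ·‖` by the factor `ρ`. Hence the expected disagreement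
`u k = E‖(1 - T) X k‖` satisfies `u (k + 1) ≤ ρ u k + C α k`. As `α (k + 1) ≤ α k`, this gives
`α (k + 1) u (k + 1) ≤ ρ α k u k + C (α k)²`, and summing over `k` absorbs the first term on the
right into the left-hand side, without unrolling the iteration.
-/

section Recursion

variable {a α β c u : ℕ → ℝ} {ρ : ℝ}

lemma summable_of_succ_le_mul_add (ha : ∀ k, 0 ≤ a k) (hρ : ρ < 1) (hc : Summable c)
    (h : ∀ k, a (k + 1) ≤ ρ * a k + c k) : Summable a := by
  refine summable_of_sum_range_le (c := (a 0 + ∑' k, |c k|) / (1 - ρ)) ha fun n => ?_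
  have hsum_succ : ∑ k ∈ Finset.range (n + 1), a k ≤
      ρ * ∑ k ∈ Finset.range n, a k + ∑ k ∈ Finset.range n, |c k| + a 0 := by
    rw [Finset.sum_range_succ', Finset.mul_sum, ← Finset.sum_add_distrib]
    gcongr with k
    exact (h k).trans (by gcongr; exact le_abs_self _)
  have hsum_le : ∑ k ∈ Finset.range n, a k ≤ ∑ k ∈ Finset.range (n + 1), a k :=
    Finset.sum_le_sum_of_subset_of_nonneg (by simp) fun k _ _ => ha k
  have hsum_c : ∑ k ∈ Finset.range n, |c k| ≤ ∑' k, |c k| :=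
    hc.abs.sum_le_tsum _ fun k _ => abs_nonneg (c k)
  rw [le_div_iff₀ (sub_pos.2 hρ)]
  linarith

lemma summable_mul_of_antitone_of_succ_le_mul_add (hα : ∀ k, 0 ≤ α k) (hα_anti : Antitone α)
    (hu : ∀ k, 0 ≤ u k) (hρ : ρ < 1) (hαβ : Summable fun k => α k * β k)
    (h : ∀ k, u (k + 1) ≤ ρ * u k + β k) : Summable fun k => α k * u k := by
  refine summable_of_succ_le_mul_add (fun k => mul_nonneg (hα k) (hu k)) hρ hαβ fun k => ?_
  calc α (k + 1) * u (k + 1)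
      ≤ α k * u (k + 1) := mul_le_mul_of_nonneg_right (hα_anti k.le_succ) (hu _)
    _ ≤ α k * (ρ * u k + β k) := mul_le_mul_of_nonneg_left (h k) (hα k)
    _ = ρ * (α k * u k) + α k * β k := by ring

end Recursion

section Spectrum

open Module.End
open scoped ComplexOrder

variable {𝕜 E : Type*} [RCLike 𝕜] [NormedAddCommGroup E] [InnerProductSpace 𝕜 E]

lemma norm_le_mul_norm_of_norm_repr_le {ι : Type*} [Fintype ι] (b : OrthonormalBasis ι 𝕜 E)
    {x y : E} {ρ : ℝ} (hρ : 0 ≤ ρ) (h : ∀ i, ‖b.repr x i‖ ≤ ρ * ‖b.repr y i‖) : ‖x‖ ≤ ρ * ‖y‖ := by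
  refine le_of_sq_le_sq ?_ (by positivity)
  rw [← b.repr.norm_map x, ← b.repr.norm_map y, mul_pow, EuclideanSpace.norm_sq_eq,
    EuclideanSpace.norm_sq_eq, Finset.mul_sum]
  gcongr with i
  rw [← mul_pow]
  gcongr
  exact h i

variable {T : E →ₗ[𝕜] E}

lemma mem_Icc_of_hasEigenvalue (hT : T.IsPositive) (hT' : (1 - T).IsPositive) {μ : ℝ}
    (hμ : HasEigenvalue T (μ : 𝕜)) : μ ∈ Set.Icc 0 1 := by
  obtain ⟨v, hv⟩ := hμ.exists_hasEigenvector
  have hv' : HasEigenvector (1 - T) ((1 - μ : ℝ) : 𝕜) v :=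
    ⟨mem_eigenspace_iff.2 (by simp [hv.apply_eq_smul, sub_smul]), hv.2⟩
  exact ⟨eigenvalue_nonneg_of_nonneg hμ hT.re_inner_nonneg_right, sub_nonneg.1 <|
    eigenvalue_nonneg_of_nonneg (hasEigenvalue_of_hasEigenvector hv') hT'.re_inner_nonneg_right⟩

lemma toEuclideanLin_one_sub {n : Type*} [Fintype n] [DecidableEq n] (A : Matrix n n 𝕜) :
    Matrix.toEuclideanLin (1 - A) = 1 - Matrix.toEuclideanLin A := by
  rw [map_sub]
  exact congrArg (· - Matrix.toEuclideanLin A) (Matrix.toLpLin_one 2)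

lemma mem_Icc_of_hasEigenvalue_toEuclideanLin {n : Type*} [Fintype n] [DecidableEq n]
    {A : Matrix n n 𝕜} (hA : A.PosSemidef) (hA' : (1 - A).PosSemidef) {μ : ℝ}
    (hμ : HasEigenvalue (Matrix.toEuclideanLin A) (μ : 𝕜)) : μ ∈ Set.Icc 0 1 :=
  mem_Icc_of_hasEigenvalue (Matrix.isPositive_toEuclideanLin_iff.2 hA)
    (toEuclideanLin_one_sub A ▸ Matrix.isPositive_toEuclideanLin_iff.2 hA') hμ

lemma exists_norm_one_sub_apply_apply_le [FiniteDimensional 𝕜 E] (hT : T.IsSymmetric)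
    (hspec : ∀ μ : ℝ, HasEigenvalue T (μ : 𝕜) → μ ∈ Set.Ioc (-1) 1) :
    ∃ ρ < 1, ∀ x, ‖(1 - T) (T x)‖ ≤ ρ * ‖(1 - T) x‖ := by
  set b := hT.eigenvectorBasis rfl
  set μ := hT.eigenvalues rfl
  have habs (i) (hi : μ i ≠ 1) : |μ i| < 1 :=
    have hμ := hspec (μ i) (hT.hasEigenvalue_eigenvalues rfl i)
    abs_lt.2 ⟨hμ.1, hμ.2.lt_of_ne hi⟩
  obtain ⟨ρ, hρ, hρ_lt⟩ := Order.exists_between_finsets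
    (insert 0 (({i | μ i ≠ 1} : Finset _).image (|μ ·|))) {1}
    (by simpa using habs)
  simp only [Finset.forall_mem_insert, Finset.forall_mem_image, Finset.mem_filter_univ,
    Finset.mem_singleton, forall_eq] at hρ hρ_lt
  have hrepr (x : E) (i) : b.repr ((1 - T) x) i = (1 - μ i) * b.repr x i := by
    simp [b, μ, hT.eigenvectorBasis_apply_self_apply, sub_mul]
  refine ⟨ρ, hρ_lt, fun x => norm_le_mul_norm_of_norm_repr_le b hρ.1.le fun i => ?_⟩
  rw [hrepr, hrepr, hT.eigenvectorBasis_apply_self_apply, mul_left_comm, norm_mul,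
    RCLike.norm_ofReal]
  obtain hi | hi := eq_or_ne (μ i) 1
  · simp [hi]
  · gcongr
    exact (hρ.2 hi).le

end Spectrum

section LinearIteration

variable {Ω E F : Type*} {m0 : MeasurableSpace Ω} {P : Measure Ω}
  [NormedAddCommGroup E] [NormedSpace ℝ E] [NormedAddCommGroup F] [NormedSpace ℝ F]
  {T : E →L[ℝ] E} {S : E →L[ℝ] F} {X W : ℕ → Ω → E} {ρ : ℝ}

lemma integrable_of_ae_eq_apply_sub (hX₀ : Integrable (X 0) P) (hW : ∀ k, Integrable (W k) P)
    (hX : ∀ k, ∀ᵐ ω ∂P, X (k + 1) ω = T (X k ω) - W k ω) (k : ℕ) : Integrable (X k) P := by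
  induction k with
  | zero => exact hX₀
  | succ k ih => exact ((T.integrable_comp ih).sub (hW k)).congr (EventuallyEq.symm (hX k))

lemma integral_norm_apply_le_of_ae_eq_apply_sub {x x' w : Ω → E}
    (hST : ∀ y, ‖S (T y)‖ ≤ ρ * ‖S y‖) (hx : Integrable x P) (hw : Integrable w P)
    (hx' : ∀ᵐ ω ∂P, x' ω = T (x ω) - w ω) :
    ∫ ω, ‖S (x' ω)‖ ∂P ≤ ρ * ∫ ω, ‖S (x ω)‖ ∂P + ‖S‖ * ∫ ω, ‖w ω‖ ∂P := by
  have hSx : Integrable (fun ω => ρ * ‖S (x ω)‖) P := (S.integrable_comp hx).norm.const_mul ρ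
  have hSw : Integrable (fun ω => ‖S‖ * ‖w ω‖) P := hw.norm.const_mul ‖S‖
  rw [← integral_const_mul, ← integral_const_mul, ← integral_add hSx hSw]
  refine integral_mono_of_nonneg (.of_forall fun ω => norm_nonneg _) (hSx.add hSw) ?_
  filter_upwards [hx'] with ω hω
  calc ‖S (x' ω)‖ = ‖S (T (x ω)) - S (w ω)‖ := by rw [hω, map_sub]
    _ ≤ ‖S (T (x ω))‖ + ‖S (w ω)‖ := norm_sub_le _ _
    _ ≤ ρ * ‖S (x ω)‖ + ‖S‖ * ‖w ω‖ := add_le_add (hST _) (S.le_opNorm _)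

lemma summable_mul_integral_norm_apply {α : ℕ → ℝ} (hα : ∀ k, 0 ≤ α k) (hα_anti : Antitone α)
    (hρ : ρ < 1) (hST : ∀ y, ‖S (T y)‖ ≤ ρ * ‖S y‖)
    (hX₀ : Integrable (X 0) P) (hW : ∀ k, Integrable (W k) P)
    (hX : ∀ k, ∀ᵐ ω ∂P, X (k + 1) ω = T (X k ω) - W k ω)
    (hαW : Summable fun k => α k * ∫ ω, ‖W k ω‖ ∂P) :
    Summable fun k => α k * ∫ ω, ‖S (X k ω)‖ ∂P := by
  refine summable_mul_of_antitone_of_succ_le_mul_add hα hα_anti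
    (fun k => integral_nonneg fun ω => norm_nonneg _) hρ ?_ fun k =>
    integral_norm_apply_le_of_ae_eq_apply_sub hST (integrable_of_ae_eq_apply_sub hX₀ hW hX k)
      (hW k) (hX k)
  simpa only [mul_left_comm] using hαW.mul_left ‖S‖

end LinearIteration

theorem cdsgd_summable_weighted_disagreement_general {Ω E : Type*} {m0 : MeasurableSpace Ω}
    {P : Measure Ω} [NormedAddCommGroup E] [InnerProductSpace ℝ E] [FiniteDimensional ℝ E]
    {T : E →ₗ[ℝ] E} (hT : T.IsSymmetric)
    (hspec : ∀ μ, Module.End.HasEigenvalue T μ → μ ∈ Set.Ioc (-1) 1)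
    {α : ℕ → ℝ} (hα : ∀ k, 0 ≤ α k) (hα_anti : Antitone α) (hα_sq : Summable fun k => α k ^ 2)
    {L : ℝ} {X G : ℕ → Ω → E} (hX₀ : Integrable (X 0) P) (hG : ∀ k, Integrable (G k) P)
    (hGL : ∀ k, ∫ ω, ‖G k ω‖ ∂P ≤ L)
    (hX : ∀ k, ∀ᵐ ω ∂P, X (k + 1) ω = T (X k ω) - α k • G k ω) :
    Summable fun k => α k * ∫ ω, ‖(1 - T) (X k ω)‖ ∂P := by
  obtain ⟨ρ, hρ, hcontract⟩ := exists_norm_one_sub_apply_apply_le hT hspec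
  refine summable_mul_integral_norm_apply (T := T.toContinuousLinearMap)
    (S := (1 - T).toContinuousLinearMap) hα hα_anti hρ hcontract hX₀
    (fun k => (hG k).smul (α k)) hX ?_
  refine .of_nonneg_of_le (fun k => mul_nonneg (hα k) (integral_nonneg fun ω => norm_nonneg _))
    (fun k => ?_) (hα_sq.mul_right L)
  calc α k * ∫ ω, ‖α k • G k ω‖ ∂P = α k ^ 2 * ∫ ω, ‖G k ω‖ ∂P := by
        simp only [norm_smul, Real.norm_of_nonneg (hα k), integral_const_mul]
        ring
    _ ≤ α k ^ 2 * L := by gcongr; exact hGL k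

/-- Lemma 8: along the CDSGD iterates `X_{k+1} = Π·X_k − α_k·G_k` with `X₁ = 0`,
`E[‖G_k‖] ≤ L`, nonincreasing steps with `Σ α_k² < ∞`, one has
`Σ_{k=2}^{∞} α_k·E[‖(I − Π)·X_k‖] < ∞`. -/
theorem cdsgd_summable_weighted_disagreement {N : ℕ} (hN : 2 ≤ N) {Ω : Type*}
    {m0 : MeasurableSpace Ω} (P : Measure Ω) [IsProbabilityMeasure P]
    (Pi : Matrix (Fin N) (Fin N) ℝ) (hsymm : Pi.IsHermitian)
    (hnonneg : ∀ i j, 0 ≤ Pi i j)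
    (hstoch : Pi.mulVec (fun _ => 1) = fun _ => 1)
    (hpsd : (1 - Pi).PosSemidef) (hpd : Pi.PosDef)
    (hlam2 : eigAsc Pi hsymm ⟨N - 2, by omega⟩ < 1)
    (α : ℕ → ℝ) (hαpos : ∀ k, 1 ≤ k → 0 < α k)
    (hαmono : ∀ k l, 1 ≤ k → k ≤ l → α l ≤ α k)
    (hαsq : Summable (fun k => (α k) ^ 2))
    (L : ℝ) (hL : 0 < L)
    (X G : ℕ → Ω → EuclideanSpace ℝ (Fin N))
    (hX1 : ∀ᵐ ω ∂P, X 1 ω = 0)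
    (hGmeas : ∀ k, AEStronglyMeasurable (G k) P)
    (hGint : ∀ k, Integrable (fun ω => ‖G k ω‖) P)
    (hGbound : ∀ k, (∫ ω, ‖G k ω‖ ∂P) ≤ L)
    (hupdate : ∀ k, 1 ≤ k → ∀ ω,
      X (k + 1) ω = (Matrix.toEuclideanLin Pi) (X k ω) - α k • G k ω) :
    Summable (fun k : ℕ =>
      α (k + 2) * ∫ ω, ‖(Matrix.toEuclideanLin (1 - Pi)) (X (k + 2) ω)‖ ∂P) := by
  have hX₁ : Integrable (X 1) P :=
    (integrable_zero Ω _ P).congr (hX1.mono fun ω h => h.symm)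
  rw [toEuclideanLin_one_sub]
  exact (summable_nat_add_iff 1).2 <|
    cdsgd_summable_weighted_disagreement_general (α := fun k => α (k + 1))
      (X := fun k => X (k + 1)) (G := fun k => G (k + 1))
      (Matrix.isSymmetric_toEuclideanLin_iff.2 hsymm)
      (fun μ hμ => Set.Icc_subset_Ioc (by norm_num) le_rfl <|
        mem_Icc_of_hasEigenvalue_toEuclideanLin hpd.posSemidef hpsd hμ)
      (fun k => (hαpos _ k.succ_pos).le)
      (antitone_nat_of_succ_le fun k => hαmono _ _ k.succ_pos (k + 1).le_succ)
      ((summable_nat_add_iff 1).2 hαsq) hX₁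
      (fun k => (integrable_norm_iff (hGmeas _)).1 (hGint _)) (fun k => hGbound _)
      (fun k => .of_forall (hupdate _ k.succ_pos))
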